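/- Let G be a graph on 2r vertices admitting a perfect matching M consisting of right edges. Then every basic 1-cover α of G satisfies Σ_{v∈V} α(v) = r; in particular G is unmixed, i.e. all minimal vertex covers of G have the same cardinality r. -/

import Mathlib

/-- A `k`-cover of a graph `G`. -/
def IsCover {n : ℕ} (G : SimpleGraph (Fin n)) (k : ℕ) (α : Fin n → ℕ) : Prop :=
  ∀ ⦃i j : Fin n⦄, G.Adj i j → k ≤ α i + α j

/-- A basic `k`-cover; basic 1-covers correspond to minimal vertex covers. -/
def IsBasicCover {n : ℕ} (G : SimpleGraph (Fin n)) (k : ℕ) (α : Fin n → ℕ) : Prop :=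
  IsCover G k α ∧ ∀ β : Fin n → ℕ, β ≤ α → IsCover G k β → β = α

/-- `{i,j}` is a right edge of `G`. -/
def IsRightEdge {n : ℕ} (G : SimpleGraph (Fin n)) (i j : Fin n) : Prop :=
  G.Adj i j ∧ ∀ i' j' : Fin n, G.Adj i i' → G.Adj j j' → G.Adj i' j'

/-- Every vertex in the support of a basic cover lies on an edge where the cover is tight. -/
theorem IsBasicCover.exists_adj_add_le {n k : ℕ} {G : SimpleGraph (Fin n)} {α : Fin n → ℕ}
    (hα : IsBasicCover G k α) {v : Fin n} (hv : α v ≠ 0) :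
    ∃ w, G.Adj v w ∧ α v + α w ≤ k := by
  by_contra! h
  have hβ : Function.update α v (α v - 1) = α := by
    refine hα.2 _ (update_le_self_iff.2 (Nat.sub_le _ _)) fun i j hij => ?_
    have hne := hij.ne
    have hcover := hα.1 hij
    by_cases hi : i = v
    · subst hi
      have := h j hij
      rw [Function.update_self, Function.update_of_ne hne.symm]
      omega
    · by_cases hj : j = v
      · subst hj
        have := h i hij.symm
        rw [Function.update_self, Function.update_of_ne hne]
        omega
      · rwa [Function.update_of_ne hi, Function.update_of_ne hj]
  have := congrFun hβ v
  rw [Function.update_self] at this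
  omega

/-- A basic 1-cover takes values at most one. -/
theorem IsBasicCover.le_one {n : ℕ} {G : SimpleGraph (Fin n)} {α : Fin n → ℕ}
    (hα : IsBasicCover G 1 α) (v : Fin n) : α v ≤ 1 := by
  by_cases hv : α v = 0
  · omega
  · obtain ⟨w, -, hw⟩ := hα.exists_adj_add_le hv
    omega

/-- A basic 1-cover is tight on every right edge. -/
theorem IsBasicCover.add_eq_one_of_isRightEdge {n : ℕ} {G : SimpleGraph (Fin n)}
    {α : Fin n → ℕ} (hα : IsBasicCover G 1 α) {i j : Fin n} (hij : IsRightEdge G i j) :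
    α i + α j = 1 := by
  have hcover := hα.1 hij.1
  have hi := hα.le_one i
  have hj := hα.le_one j
  by_contra hne
  obtain ⟨i', hii', hi'⟩ := hα.exists_adj_add_le (v := i) (by omega)
  obtain ⟨j', hjj', hj'⟩ := hα.exists_adj_add_le (v := j) (by omega)
  have := hα.1 (hij.2 i' j' hii' hjj')
  omega

/-- Let `G` be a graph on `2r` vertices admitting a perfect matching `M`
consisting of right edges.  Then every basic 1-cover `α` of `G` satisfies `∑ v, α v = r`;
in particular `G` is unmixed: every minimal vertex cover of `G` has cardinality `r`. -/
theorem basicCover_sum_eq_of_right_perfect_matching {r : ℕ}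
    (G : SimpleGraph (Fin (2 * r)))
    (M : G.Subgraph) (hM : M.IsPerfectMatching)
    (hright : ∀ i j : Fin (2 * r), M.Adj i j → IsRightEdge G i j) :
    ∀ α : Fin (2 * r) → ℕ, IsBasicCover G 1 α →
      (∑ v, α v = r) ∧ (Finset.univ.filter fun v => α v ≠ 0).card = r := by
  intro α hα
  choose f hf hf_unique using SimpleGraph.Subgraph.isPerfectMatching_iff.1 hM
  have hinv : Function.Involutive f := fun v => (hf_unique (f v) v (hf v).symm).symm
  have hsum : ∑ v, α v = r := by
    have htotal : ∑ v, (α v + α (f v)) = 2 * r := by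
      simp [fun v => hα.add_eq_one_of_isRightEdge (hright v (f v) (hf v))]
    have hperm : ∑ v, α (f v) = ∑ v, α v := Equiv.sum_comp hinv.toPerm α
    rw [Finset.sum_add_distrib, hperm] at htotal
    omega
  refine ⟨hsum, ?_⟩
  rw [Finset.card_filter]
  refine (Finset.sum_congr rfl fun v _ => ?_).trans hsum
  have := hα.le_one v
  split_ifs <;> omega
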